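/- Let X be a path-connected metrizable ANR, n ∈ ℕ, A ⊆ S_nX, F : A → ℝ continuous and φ : A → A a homotopy equivalence. Assume that F is bounded from below, that (F,φ) satisfies condition (D) on A, that SC_{n,X}(φ(B)) ≥ SC_{n,X}(B) for all closed subsets B ⊆ A, that φ is homotopic to the identity of A, and that F(Fix φ) is a finite set. Then SC_{n,X}(A) ≤ Σ_{μ ∈ ℝ} SC_{n,X}(Fix φ ∩ F_μ), where F_μ := F⁻¹({μ}). -/

import Mathlib

/-!
Write `ν(B) = SC_{n,X}(B)` for `B ⊆ A`. The argument is of Lusternik–Schnirelmann type.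

*Homotopy monotonicity* (`SCsub_le_of_homotopic_id`): if `ψ : A → A` is homotopic to the identity
and maps `B` into `C`, then `ν(B) ≤ ν(C)`. A filling of `ψ γ` becomes a filling of `γ` by gluing on
the track of the homotopy as a collar (`isFillingDomain_preimage`). This gives filling domains that
are only relatively open in `A`, and `A` need not be closed. They are thickened to open sets in
`IsFillingDomain.exists_isOpen`: the ANR `X` is a neighbourhood retract of a convex set in a normed
space, where a filling can be extended approximately by a partition of unity and its boundary values
then corrected by a linear collar.

*Sublevel sets* (`SCsub_sublevel_le`): condition (D) bounds `F - F ∘ φ` from below away from zero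
on closed sets without fixed points on which `F` is bounded. Hence an iterate of `φ` pushes a sublevel
set down through any interval free of critical values, while near a critical level `μ` one step of
`φ` pushes everything outside a neighbourhood of `Fix φ ∩ F_μ` below `μ`. Induction on the finitely
many critical levels bounds `ν` of each sublevel set by the sum.

*From sublevel sets to `A`* (`CondD.exists_deformation`): `F` may be unbounded above, so no single
iterate of `φ` moves `A` below a level `a` exceeding all critical ones. With a homotopy
`G : id ≃ φ`, concatenating `φᵏ ∘ G_r` over all `k` gives `H : A × ℝ → A` starting at the identity.
The track `G([0,1], x)` is compact, so `φᵏ` maps it below `a` for large `k`, uniformly near `x`.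
A continuous `τ : A → ℝ` exceeding the required times exists by a partition of unity, and
`x ↦ H(x, τ(x))` is homotopic to the identity with values below `a`.
-/

open Metric Set ContinuousMap
open scoped RealInnerProductSpace

noncomputable section

universe u

/-- The unit sphere `Sⁿ` in `ℝ^{n+1}`. -/
abbrev Sph (n : ℕ) : Set (EuclideanSpace ℝ (Fin (n + 1))) := Metric.sphere 0 1

/-- The closed unit ball `B^{n+1}` in `ℝ^{n+1}`. -/
abbrev Ball (n : ℕ) : Set (EuclideanSpace ℝ (Fin (n + 1))) := Metric.closedBall 0 1

/-- `S_nX`: the space of nullhomotopic continuous maps `Sⁿ → X`, with the compact-open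
topology (as a subspace of `C(Sⁿ, X)`). -/
abbrev SphereMaps (n : ℕ) (X : Type*) [TopologicalSpace X] : Type _ :=
  {f : C(↥(Sph n), X) // ∃ x : X, f.Homotopic (ContinuousMap.const _ x)}

/-- `B_{n+1}X`: the space of continuous maps `B^{n+1} → X` with the compact-open topology. -/
abbrev BallMaps (n : ℕ) (X : Type*) [TopologicalSpace X] : Type _ := C(↥(Ball n), X)

/-- The inclusion `Sⁿ ↪ B^{n+1}`. -/
def sphIncl (n : ℕ) : C(↥(Sph n), ↥(Ball n)) :=
  ⟨fun p => ⟨p.1, sphere_subset_closedBall p.2⟩, (continuous_subtype_val.subtype_mk _)⟩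

/-- A sphere filling over `A ⊆ S_nX`: a continuous map `s : A → B_{n+1}X` with
`s(γ)|_{Sⁿ} = γ` for all `γ ∈ A`. -/
def IsSphereFilling {n : ℕ} {X : Type*} [TopologicalSpace X]
    (A : Set (SphereMaps n X)) (s : C(↥A, BallMaps n X)) : Prop :=
  ∀ γ : ↥A, (s γ).comp (sphIncl n) = (γ : SphereMaps n X).1

/-- A subset `A ⊆ S_nX` is a sphere filling domain if a sphere filling over `A` exists. -/
def IsFillingDomain {n : ℕ} {X : Type*} [TopologicalSpace X] (A : Set (SphereMaps n X)) : Prop :=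
  ∃ s : C(↥A, BallMaps n X), IsSphereFilling A s

/-- The subspace spherical complexity `SC_{n,X}(A)`: the minimal number of sphere filling
domains, open in `S_nX`, needed to cover `A` (`⊤` if no finite cover exists;
the empty set gets the value `0`). -/
def SCsub (n : ℕ) (X : Type*) [TopologicalSpace X] (A : Set (SphereMaps n X)) : ℕ∞ :=
  sInf {k : ℕ∞ | ∃ m : ℕ, k = m ∧ ∃ U : Fin m → Set (SphereMaps n X),
    (∀ i, IsOpen (U i) ∧ IsFillingDomain (U i)) ∧ A ⊆ ⋃ i, U i}

/-- A metrizable space `Y` is an absolute neighborhood retract (ANR) if for every metrizable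
space `Z`, every closed subspace `C ⊆ Z` and every continuous `f : C → Y`, the map `f` admits
a continuous extension to an open neighborhood of `C` in `Z`. -/
def IsANR (Y : Type u) [TopologicalSpace Y] : Prop :=
  ∀ (Z : Type u) [TopologicalSpace Z] [TopologicalSpace.MetrizableSpace Z] (C : Set Z),
    IsClosed C → ∀ f : C(↥C, Y),
      ∃ (U : Set Z) (_ : IsOpen U) (hCU : C ⊆ U) (g : C(↥U, Y)),
        ∀ (z : Z) (hz : z ∈ C), g ⟨z, hCU hz⟩ = f ⟨z, hz⟩

/-- A continuous map is a homotopy equivalence. -/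
def IsHtpyEquiv {Y Z : Type*} [TopologicalSpace Y] [TopologicalSpace Z] (f : C(Y, Z)) : Prop :=
  ∃ g : C(Z, Y), (f.comp g).Homotopic (ContinuousMap.id Z) ∧
    (g.comp f).Homotopic (ContinuousMap.id Y)

/-- Condition (D) of Rudyak–Schlenk for a function `F` and a self-map `φ`:
(D1) `F(φ(x)) < F(x)` away from the fixed points of `φ`, and (D2) whenever `F` is bounded
on a set `B` but `{F(y) - F(φ(y)) : y ∈ B}` is not bounded away from zero, the closure
of `B` meets `Fix φ`. -/
def CondD {Y : Type*} [TopologicalSpace Y] (F : Y → ℝ) (φ : Y → Y) : Prop :=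
  (∀ x : Y, φ x ≠ x → F (φ x) < F x) ∧
  (∀ B : Set Y, (∃ M : ℝ, ∀ y ∈ B, |F y| ≤ M) →
    (¬ ∃ ε > 0, ∀ y ∈ B, ε ≤ |F y - F (φ y)|) →
    (closure B ∩ {x | φ x = x}).Nonempty)

/-- The sum of a (possibly infinite) family in `ℕ∞`, defined as the supremum of its
finite partial sums. -/
def esum {ι : Type*} (f : ι → ℕ∞) : ℕ∞ := ⨆ s : Finset ι, ∑ i ∈ s, f i


/-! ### Covers and subadditivity -/

section Cover

variable {n : ℕ} {X : Type u} [TopologicalSpace X]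

lemma SCsub_le_card {ι : Type*} [Fintype ι] {A : Set (SphereMaps n X)}
    (U : ι → Set (SphereMaps n X)) (hU : ∀ i, IsOpen (U i) ∧ IsFillingDomain (U i))
    (hA : A ⊆ ⋃ i, U i) : SCsub n X A ≤ Fintype.card ι := by
  refine sInf_le ⟨Fintype.card ι, rfl, fun i => U ((Fintype.equivFin ι).symm i),
    fun i => hU _, fun x hx => ?_⟩
  obtain ⟨i, hi⟩ := mem_iUnion.1 (hA hx)
  exact mem_iUnion.2 ⟨Fintype.equivFin ι i, by simpa using hi⟩

lemma SCsub_eq_top_or_cover (A : Set (SphereMaps n X)) :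
    SCsub n X A = ⊤ ∨ ∃ m : ℕ, SCsub n X A = m ∧ ∃ U : Fin m → Set (SphereMaps n X),
      (∀ i, IsOpen (U i) ∧ IsFillingDomain (U i)) ∧ A ⊆ ⋃ i, U i := by
  by_cases h : {k : ℕ∞ | ∃ m : ℕ, k = m ∧ ∃ U : Fin m → Set (SphereMaps n X),
    (∀ i, IsOpen (U i) ∧ IsFillingDomain (U i)) ∧ A ⊆ ⋃ i, U i}.Nonempty
  · exact Or.inr (csInf_mem h)
  · left
    rw [SCsub, not_nonempty_iff_eq_empty.1 h, sInf_empty]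

lemma SCsub_mono {A B : Set (SphereMaps n X)} (h : A ⊆ B) : SCsub n X A ≤ SCsub n X B := by
  rcases SCsub_eq_top_or_cover B with hB | ⟨m, hm, U, hU, hBU⟩
  · simp [hB]
  · simpa [hm] using SCsub_le_card U hU (h.trans hBU)

lemma SCsub_empty : SCsub n X ∅ = 0 := by
  simpa using SCsub_le_card (n := n) (X := X) (A := ∅) (ι := Empty) (fun i => i.elim)
    (fun i => i.elim) (empty_subset _)

lemma SCsub_union (A B : Set (SphereMaps n X)) :
    SCsub n X (A ∪ B) ≤ SCsub n X A + SCsub n X B := by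
  rcases SCsub_eq_top_or_cover A with hA | ⟨m, hm, U, hU, hAU⟩
  · simp [hA]
  rcases SCsub_eq_top_or_cover B with hB | ⟨k, hk, W, hW, hBW⟩
  · simp [hB]
  have := SCsub_le_card (A := A ∪ B) (Sum.elim U W) (by rintro (i | i) <;> simp [hU, hW]) (by
    rintro x (hx | hx)
    · obtain ⟨i, hi⟩ := mem_iUnion.1 (hAU hx)
      exact mem_iUnion.2 ⟨Sum.inl i, hi⟩
    · obtain ⟨i, hi⟩ := mem_iUnion.1 (hBW hx)
      exact mem_iUnion.2 ⟨Sum.inr i, hi⟩)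
  simpa [hm, hk] using this

/-- Continuity of the spherical complexity; it is immediate because the covering domains are
open in the whole of `S_nX`. -/
lemma exists_isOpen_SCsub_le (A : Set (SphereMaps n X)) :
    ∃ U, IsOpen U ∧ A ⊆ U ∧ SCsub n X U ≤ SCsub n X A := by
  rcases SCsub_eq_top_or_cover A with hA | ⟨m, hm, U, hU, hAU⟩
  · exact ⟨univ, isOpen_univ, subset_univ _, by simp [hA]⟩
  · exact ⟨⋃ i, U i, isOpen_iUnion fun i => (hU i).1, hAU, by
      simpa [hm] using SCsub_le_card U hU subset_rfl⟩

end Cover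

/-! ### Gluing a collar to a ball -/

/-- A family of maps on `B^{n+1}` and a family of homotopies on `Sⁿ` starting at its boundary
values fit together to a family of maps on `B^{n+1}`: the given map is placed on the ball of
radius `1/2`, the homotopy on the remaining collar. -/
lemma exists_collar {n : ℕ} {P Y : Type*} [TopologicalSpace P] [TopologicalSpace Y]
    (f : P × ↥(Ball n) → Y) (hf : Continuous f)
    (g : P × ↥(Sph n) × ℝ → Y) (hg : Continuous g)
    (hfg : ∀ π p, g (π, p, 0) = f (π, sphIncl n p)) :
    ∃ G : P × ↥(Ball n) → Y, Continuous G ∧ (∀ π p, G (π, sphIncl n p) = g (π, p, 1)) ∧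
      ∀ π b, (∃ b', G (π, b) = f (π, b')) ∨ ∃ p, ∃ t ∈ Icc (0 : ℝ) 1, G (π, b) = g (π, p, t) := by
  classical
  obtain ⟨e, he⟩ : (Sph n).Nonempty := NormedSpace.sphere_nonempty.2 zero_le_one
  -- radial projection, with a dummy value at the origin
  let proj : ↥(Ball n) → ↥(Sph n) := fun b =>
    if h : (b : EuclideanSpace ℝ (Fin (n + 1))) = 0 then ⟨e, he⟩
    else ⟨‖(b : EuclideanSpace ℝ (Fin (n + 1)))‖⁻¹ • (b : EuclideanSpace ℝ (Fin (n + 1))), by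
      rw [mem_sphere_zero_iff_norm, norm_smul, norm_inv, norm_norm,
        inv_mul_cancel₀ (norm_ne_zero_iff.2 h)]⟩
  have hproj : ∀ b : ↥(Ball n), (b : EuclideanSpace ℝ (Fin (n + 1))) ≠ 0 →
      (proj b : EuclideanSpace ℝ (Fin (n + 1))) =
        ‖(b : EuclideanSpace ℝ (Fin (n + 1)))‖⁻¹ • (b : EuclideanSpace ℝ (Fin (n + 1))) := by
    intro b hb
    simp only [proj, dif_neg hb]
  have hprojc : ContinuousOn proj {b | (b : EuclideanSpace ℝ (Fin (n + 1))) ≠ 0} := by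
    rw [Topology.IsInducing.subtypeVal.continuousOn_iff]
    refine ContinuousOn.congr (f := fun b : ↥(Ball n) =>
      ‖(b : EuclideanSpace ℝ (Fin (n + 1)))‖⁻¹ • (b : EuclideanSpace ℝ (Fin (n + 1)))) ?_
      (fun b hb => hproj b hb)
    intro b hb
    have hb' : ‖(b : EuclideanSpace ℝ (Fin (n + 1)))‖ ≠ 0 := norm_ne_zero_iff.2 hb
    have h1 : ContinuousAt (fun b : ↥(Ball n) => ‖(b : EuclideanSpace ℝ (Fin (n + 1)))‖) b := by
      fun_prop
    exact ((h1.inv₀ hb').smul continuous_subtype_val.continuousAt).continuousWithinAt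
  -- the map expanding the ball of radius `1/2`
  let c : ↥(Ball n) → ↥(Ball n) := fun b =>
    ⟨((2 : ℝ) / max 1 (2 * ‖(b : EuclideanSpace ℝ (Fin (n + 1)))‖)) •
      (b : EuclideanSpace ℝ (Fin (n + 1))), by
      have h1 : 0 < max 1 (2 * ‖(b : EuclideanSpace ℝ (Fin (n + 1)))‖) :=
        lt_max_of_lt_left one_pos
      rw [mem_closedBall_zero_iff, norm_smul, Real.norm_of_nonneg (by positivity), div_mul_eq_mul_div,
        div_le_one h1]
      exact le_max_right _ _⟩
  have hc : Continuous c := by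
    have h1 : Continuous fun b : ↥(Ball n) =>
        max 1 (2 * ‖(b : EuclideanSpace ℝ (Fin (n + 1)))‖) := by fun_prop
    have h2 : ∀ b : ↥(Ball n), max 1 (2 * ‖(b : EuclideanSpace ℝ (Fin (n + 1)))‖) ≠ 0 :=
      fun b => (lt_max_of_lt_left one_pos).ne'
    exact Continuous.subtype_mk ((continuous_const.div h1 h2).smul continuous_subtype_val) _
  have hbd : ∀ b : ↥(Ball n), ‖(b : EuclideanSpace ℝ (Fin (n + 1)))‖ ≤ 1 := fun b =>
    mem_closedBall_zero_iff.1 b.2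
  refine ⟨fun q => if ‖(q.2 : EuclideanSpace ℝ (Fin (n + 1)))‖ ≤ 1 / 2 then f (q.1, c q.2)
    else g (q.1, proj q.2, 2 * ‖(q.2 : EuclideanSpace ℝ (Fin (n + 1)))‖ - 1), ?_, ?_, ?_⟩
  · refine continuous_if_le (by fun_prop) (by fun_prop) (by fun_prop) ?_ ?_
    · refine hg.comp_continuousOn (ContinuousOn.prodMk (by fun_prop)
        (ContinuousOn.prodMk (hprojc.comp (by fun_prop) ?_) (by fun_prop)))
      intro q hq h0
      have hq' : (1 / 2 : ℝ) ≤ ‖(q.2 : EuclideanSpace ℝ (Fin (n + 1)))‖ := hq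
      rw [h0, norm_zero] at hq'
      norm_num at hq'
    · rintro ⟨π, b⟩ hb
      simp only at hb ⊢
      have h0 : (b : EuclideanSpace ℝ (Fin (n + 1))) ≠ 0 := by
        intro h0
        rw [h0, norm_zero] at hb
        norm_num at hb
      rw [hb, show (2 : ℝ) * (1 / 2) - 1 = 0 by norm_num, hfg]
      congr 2
      apply Subtype.ext
      change _ = (proj b : EuclideanSpace ℝ (Fin (n + 1)))
      rw [hproj b h0]
      simp only [c, hb]
      norm_num
  · intro π p
    have hp : ‖(p : EuclideanSpace ℝ (Fin (n + 1)))‖ = 1 := mem_sphere_zero_iff_norm.1 p.2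
    have h0 : ((sphIncl n p : ↥(Ball n)) : EuclideanSpace ℝ (Fin (n + 1))) ≠ 0 := by
      change (p : EuclideanSpace ℝ (Fin (n + 1))) ≠ 0
      rw [← norm_ne_zero_iff, hp]
      exact one_ne_zero
    have hpp : proj (sphIncl n p) = p := by
      apply Subtype.ext
      rw [hproj _ h0]
      change ‖(p : EuclideanSpace ℝ (Fin (n + 1)))‖⁻¹ • (p : EuclideanSpace ℝ (Fin (n + 1))) = p
      simp [hp]
    have hn : ‖((sphIncl n p : ↥(Ball n)) : EuclideanSpace ℝ (Fin (n + 1)))‖ = 1 := hp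
    simp only [hn, hpp]
    norm_num
  · intro π b
    by_cases hb : ‖(b : EuclideanSpace ℝ (Fin (n + 1)))‖ ≤ 1 / 2
    · exact Or.inl ⟨c b, by simp only [hb, if_true]⟩
    · refine Or.inr ⟨proj b, 2 * ‖(b : EuclideanSpace ℝ (Fin (n + 1)))‖ - 1, ⟨?_, ?_⟩, ?_⟩
      · linarith
      · linarith [hbd b]
      · simp only [hb, if_false]

/-! ### Transport of fillings along homotopies -/

/-- If `ψ : A → A` is homotopic to the identity, a filling of `ψ γ` yields a filling of `γ`, by
using the track of the homotopy as a collar. -/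
lemma isFillingDomain_preimage {n : ℕ} {X : Type u} [TopologicalSpace X]
    {A : Set (SphereMaps n X)} {ψ : C(↥A, ↥A)} (hψ : (ContinuousMap.id ↥A).Homotopic ψ)
    {W : Set (SphereMaps n X)} (hW : IsFillingDomain W) :
    IsFillingDomain (Subtype.val '' {γ : ↥A | (ψ γ : SphereMaps n X) ∈ W}) := by
  obtain ⟨H⟩ := hψ
  obtain ⟨s, hs⟩ := hW
  set V : Set (SphereMaps n X) := Subtype.val '' {γ : ↥A | (ψ γ : SphereMaps n X) ∈ W} with hV
  have hVA : ∀ v : ↥V, (v : SphereMaps n X) ∈ A := by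
    rintro ⟨_, γ, -, rfl⟩
    exact γ.2
  let j : ↥V → ↥A := fun v => ⟨v, hVA v⟩
  have hj : Continuous j := continuous_subtype_val.subtype_mk _
  have hVW : ∀ v : ↥V, (ψ (j v) : SphereMaps n X) ∈ W := by
    rintro ⟨_, γ, hγ, rfl⟩
    exact hγ
  let k : ↥V → ↥W := fun v => ⟨ψ (j v), hVW v⟩
  have hk : Continuous k := (continuous_subtype_val.comp (ψ.continuous.comp hj)).subtype_mk _
  have hH : Continuous fun q : ↥V × ↥(Sph n) × ℝ =>
      (H (projIcc (0 : ℝ) 1 zero_le_one (1 - q.2.2), j q.1) : SphereMaps n X).1 := by fun_prop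
  obtain ⟨G, hG, hG1, -⟩ := exists_collar (fun q : ↥V × ↥(Ball n) => s (k q.1) q.2)
    (by fun_prop)
    (fun q : ↥V × ↥(Sph n) × ℝ =>
      (H (projIcc (0 : ℝ) 1 zero_le_one (1 - q.2.2), j q.1) : SphereMaps n X).1 q.2.1)
    (by fun_prop) (by
      intro v p
      have := congrArg (fun f => f p) (hs (k v))
      simp only [ContinuousMap.comp_apply] at this
      rw [this]
      simp [k])
  refine ⟨ContinuousMap.curry ⟨G, hG⟩, fun v => ?_⟩
  ext p
  simp only [ContinuousMap.comp_apply, ContinuousMap.curry_apply, ContinuousMap.coe_mk]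
  rw [hG1]
  simp [j]

/-! ### Embedding an ANR into a normed space -/

/-- The Kuratowski–Wojdysławski embedding `x ↦ d(x, ·) - d(x₀, ·)` into the space of bounded
continuous functions. -/
def kurEmb {X : Type*} [MetricSpace X] (x₀ x : X) : BoundedContinuousFunction X ℝ :=
  BoundedContinuousFunction.ofNormedAddCommGroup (fun z => dist x z - dist x₀ z) (by fun_prop)
    (dist x x₀) (fun z => by
      rw [Real.norm_eq_abs]
      exact abs_dist_sub_le x x₀ z)

lemma kurEmb_isometry {X : Type*} [MetricSpace X] (x₀ : X) : Isometry (kurEmb x₀) := by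
  refine Isometry.of_dist_eq fun x y => le_antisymm ?_ ?_
  · refine (BoundedContinuousFunction.dist_le dist_nonneg).2 fun z => ?_
    change dist (dist x z - dist x₀ z) (dist y z - dist x₀ z) ≤ _
    rw [Real.dist_eq, sub_sub_sub_cancel_right]
    exact abs_dist_sub_le x y z
  · have h := BoundedContinuousFunction.dist_coe_le_dist (f := kurEmb x₀ x) (g := kurEmb x₀ y) y
    change dist (dist x y - dist x₀ y) (dist y y - dist x₀ y) ≤ _ at h
    rwa [Real.dist_eq, sub_sub_sub_cancel_right, dist_self, sub_zero,
      abs_of_nonneg dist_nonneg] at h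

/-- The image of the embedding is closed in its convex hull: if `Σ λᵢ ι(xᵢ)` is close to `ι y`,
then evaluation at `y` shows that `Σ λᵢ d(xᵢ, y)` is small. -/
lemma kurEmb_closed {X : Type*} [MetricSpace X] (x₀ : X) {f : BoundedContinuousFunction X ℝ}
    (hf : f ∈ convexHull ℝ (range (kurEmb x₀))) (hcl : f ∈ closure (range (kurEmb x₀))) :
    f ∈ range (kurEmb x₀) := by
  -- a point of the hull is bounded below by a positive multiple of the distance to some `x`
  have key : ∃ x : X, ∃ c > 0, ∀ y, c * dist x y ≤ f y + dist x₀ y := by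
    let T : Set (BoundedContinuousFunction X ℝ) :=
      {f | (∃ x : X, ∃ c > 0, ∀ y, c * dist x y ≤ f y + dist x₀ y)}
    have hT : Convex ℝ T := by
      rintro f ⟨x, c, hc, hx⟩ g ⟨x', c', hc', hx'⟩ a b ha hb hab
      rcases ha.eq_or_lt with rfl | ha
      · obtain rfl : b = 1 := by linarith
        exact ⟨x', c', hc', fun y => by simpa using hx' y⟩
      · refine ⟨x, a * c, by positivity, fun y => ?_⟩
        have h1 := mul_le_mul_of_nonneg_left (hx y) ha.le
        have h2 : 0 ≤ b * (g y + dist x₀ y) :=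
          mul_nonneg hb (le_trans (by positivity) (hx' y))
        have h3 : dist x₀ y = a * dist x₀ y + b * dist x₀ y := by rw [← add_mul, hab, one_mul]
        simp only [BoundedContinuousFunction.coe_add, BoundedContinuousFunction.coe_smul,
          Pi.add_apply, smul_eq_mul]
        nlinarith
    exact convexHull_min (t := T) (by
      rintro _ ⟨x, rfl⟩
      exact ⟨x, 1, one_pos, fun y => by
        change 1 * dist x y ≤ (dist x y - dist x₀ y) + dist x₀ y
        linarith⟩) hT hf
  obtain ⟨x, c, hc, hx⟩ := key
  refine ⟨x, eq_of_forall_dist_le fun ε hε => ?_⟩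
  obtain ⟨_, ⟨y, rfl⟩, hy⟩ := Metric.mem_closure_iff.1 hcl (min (ε / 2) (c * (ε / 2)))
    (by positivity)
  have h1 : dist (f y) (kurEmb x₀ y y) < c * (ε / 2) :=
    (BoundedContinuousFunction.dist_coe_le_dist y).trans_lt (hy.trans_le (min_le_right _ _))
  have h2 : kurEmb x₀ y y = - dist x₀ y := by
    change dist y y - dist x₀ y = _
    simp
  rw [h2, Real.dist_eq, sub_neg_eq_add] at h1
  have h3 : c * dist x y < c * (ε / 2) := (hx y).trans_lt ((le_abs_self _).trans_lt h1)
  have h4 : dist x y < ε / 2 := lt_of_mul_lt_mul_left h3 hc.le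
  calc dist (kurEmb x₀ x) f ≤ dist (kurEmb x₀ x) (kurEmb x₀ y) + dist (kurEmb x₀ y) f :=
        dist_triangle _ _ _
    _ ≤ ε / 2 + ε / 2 := by
        rw [(kurEmb_isometry x₀).dist_eq, dist_comm _ f]
        exact add_le_add h4.le (hy.le.trans (min_le_left _ _))
    _ = ε := by ring

/-- An ANR is a neighbourhood retract of a convex subset `K` of a normed space `E`. The
neighbourhood is `K ∩ O`, and the retraction `r` is a total function with junk values off it. -/
lemma IsANR.exists_retract {X : Type u} [TopologicalSpace X] [TopologicalSpace.MetrizableSpace X]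
    [Nonempty X] (hX : IsANR X) :
    ∃ (E : Type u) (_ : NormedAddCommGroup E) (_ : NormedSpace ℝ E) (K O : Set E) (ι : C(X, E))
      (r : E → X), Convex ℝ K ∧ IsOpen O ∧ (∀ x, ι x ∈ K) ∧ (∀ x, ι x ∈ O) ∧
        ContinuousOn r (K ∩ O) ∧ ∀ x, r (ι x) = x := by
  classical
  let _ := TopologicalSpace.metrizableSpaceMetric X
  obtain ⟨x₀⟩ := ‹Nonempty X›
  let K : Set (BoundedContinuousFunction X ℝ) := convexHull ℝ (range (kurEmb x₀))
  have hK : ∀ x, kurEmb x₀ x ∈ K := fun x => subset_convexHull ℝ _ (mem_range_self x)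
  have hiso := kurEmb_isometry x₀
  let C : Set ↥K := Subtype.val ⁻¹' range (kurEmb x₀)
  have hC : IsClosed C := by
    refine isClosed_of_closure_subset fun f hf => ?_
    exact kurEmb_closed x₀ f.2
      (closure_mono (image_preimage_subset _ _) (image_closure_subset_closure_image
        continuous_subtype_val (mem_image_of_mem _ hf)))
  let e := hiso.isEmbedding.toHomeomorph
  let f : C(↥C, X) := ⟨fun z => e.symm ⟨z.1.1, z.2⟩, e.symm.continuous.comp
    ((continuous_subtype_val.comp continuous_subtype_val).subtype_mk _)⟩
  obtain ⟨U, hU, hCU, g, hg⟩ := hX ↥K C hC f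
  obtain ⟨O, hO, rfl⟩ := isOpen_induced_iff.1 hU
  have hKU : ∀ x, (⟨kurEmb x₀ x, hK x⟩ : ↥K) ∈ C := fun x => mem_range_self x
  refine ⟨_, inferInstance, inferInstance, K, O, ⟨kurEmb x₀, hiso.continuous⟩,
    fun z => if h : ∃ h : z ∈ K, z ∈ O then g ⟨⟨z, h.1⟩, h.2⟩ else x₀,
    convex_convexHull _ _, hO, hK, fun x => hCU (hKU x), ?_, ?_⟩
  · rw [continuousOn_iff_continuous_domRestrict]
    have : Continuous fun z : ↥(K ∩ O) =>
        g ⟨⟨z.1, z.2.1⟩, (z.2.2 : (⟨z.1, z.2.1⟩ : ↥K) ∈ Subtype.val ⁻¹' O)⟩ :=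
      g.continuous.comp ((continuous_subtype_val.subtype_mk _).subtype_mk _)
    refine this.congr fun z => ?_
    have h : ∃ h : (z : BoundedContinuousFunction X ℝ) ∈ K,
      (z : BoundedContinuousFunction X ℝ) ∈ O := ⟨z.2.1, z.2.2⟩
    simp only [domRestrict_apply, dif_pos h]
  · intro x
    have h : ∃ h : kurEmb x₀ x ∈ K, kurEmb x₀ x ∈ O := ⟨hK x, hCU (hKU x)⟩
    simp only [ContinuousMap.coe_mk, dif_pos h]
    rw [hg _ (hKU x)]
    exact e.symm_apply_eq.2 rfl

/-! ### Thickening filling domains -/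

/-- A continuous map `s` from an arbitrary (not necessarily closed) subset `V` of a metric space
into a convex set `K`, with graph in an open set `R`, can be approximated by a continuous map
on an open neighbourhood of `V` with graph still in `R`: average nearby values of `s` with a
partition of unity. -/
lemma exists_approx_extension {M E : Type*} [MetricSpace M] [NormedAddCommGroup E]
    [NormedSpace ℝ E] {V : Set M} {K : Set E} (hK : Convex ℝ K) {s : ↥V → E} (hs : Continuous s)
    (hsK : ∀ v, s v ∈ K) {R : Set (M × E)} (hR : IsOpen R) (hsR : ∀ v : ↥V, ((v : M), s v) ∈ R) :
    ∃ (U : Set M) (g : C(↥U, E)), IsOpen U ∧ V ⊆ U ∧ (∀ u, g u ∈ K) ∧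
      ∀ u : ↥U, ((u : M), g u) ∈ R := by
  have h1 : ∀ v : ↥V, ∃ δ > 0, ball (v : M) δ ×ˢ ball (s v) δ ⊆ R := fun v => by
    obtain ⟨δ, hδ, h⟩ := Metric.isOpen_iff.1 hR _ (hsR v)
    exact ⟨δ, hδ, by rwa [ball_prod_same]⟩
  choose δ hδ hδR using h1
  have h2 : ∀ v : ↥V, ∃ ρ > 0, ρ ≤ 1 ∧ ρ ≤ δ v ∧ ∀ w : ↥V, dist w v < ρ → s w ∈ ball (s v) (δ v) := by
    intro v
    obtain ⟨ρ, hρ, h⟩ := Metric.continuousAt_iff.1 hs.continuousAt (δ v) (hδ v)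
    refine ⟨min ρ (min 1 (δ v)), lt_min hρ (lt_min one_pos (hδ v)),
      (min_le_right _ _).trans (min_le_left _ _), (min_le_right _ _).trans (min_le_right _ _),
      fun w hw => h (hw.trans_le (min_le_left _ _))⟩
  choose ρ hρ hρ1 hρδ hρs using h2
  let U : Set M := ⋃ v : ↥V, ball (v : M) (ρ v / 4)
  let near : ↥U → Set ↥V := fun u => {v | dist (u : M) v < ρ v / 4}
  have hne : ∀ u : ↥U, (near u).Nonempty := fun u => by
    obtain ⟨v, hv⟩ := mem_iUnion.1 u.2
    exact ⟨v, hv⟩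
  obtain ⟨g, hg⟩ := exists_continuous_forall_mem_convex_of_local_const
    (t := fun u : ↥U => convexHull ℝ (s '' near u)) (fun u => convex_convexHull _ _) (fun u => by
      obtain ⟨v, hv⟩ := hne u
      refine ⟨s v, ?_⟩
      have : ∀ᶠ y : ↥U in nhds u, dist (y : M) v < ρ v / 4 :=
        (continuous_subtype_val.dist continuous_const).continuousAt.eventually (gt_mem_nhds hv)
      filter_upwards [this] with y hy
      exact subset_convexHull ℝ _ (mem_image_of_mem _ hy))
  refine ⟨U, g, isOpen_iUnion fun v => isOpen_ball, fun v hv => mem_iUnion.2 ⟨⟨v, hv⟩,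
    mem_ball_self (by have := hρ ⟨v, hv⟩; positivity)⟩, fun u => ?_, fun u => ?_⟩
  · exact convexHull_min (by rintro _ ⟨v, -, rfl⟩; exact hsK v) hK (hg u)
  · -- among the centres near `u`, one has at least half the largest possible radius
    obtain ⟨v, hv, hmax⟩ : ∃ v ∈ near u, ∀ w ∈ near u, ρ w < 2 * ρ v := by
      have hbdd : BddAbove (ρ '' near u) := ⟨1, by rintro _ ⟨v, -, rfl⟩; exact hρ1 v⟩
      have hpos : 0 < sSup (ρ '' near u) := by
        obtain ⟨v, hv⟩ := hne u
        exact (hρ v).trans_le (le_csSup hbdd (mem_image_of_mem _ hv))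
      obtain ⟨_, ⟨v, hv, rfl⟩, h⟩ := exists_lt_of_lt_csSup ((hne u).image ρ) (half_lt_self hpos)
      exact ⟨v, hv, fun w hw => by linarith [le_csSup hbdd (mem_image_of_mem ρ hw)]⟩
    have hv' : dist (u : M) v < ρ v / 4 := hv
    apply hδR v
    refine ⟨?_, ?_⟩
    · rw [mem_ball]
      linarith [hρδ v, hρ v]
    · refine convexHull_min ?_ (convex_ball (s v) (δ v)) (hg u)
      rintro _ ⟨w, hw, rfl⟩
      have hw' : dist (u : M) w < ρ w / 4 := hw
      apply hρs
      have := dist_triangle_left (w : M) v u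
      change dist (w : M) v < _
      linarith [hmax w hw, hρ v]

/-- Over an ANR every filling domain is contained in an open one. The given filling, seen in the
ambient normed space, is extended approximately to a neighbourhood; a linear collar corrects its
boundary values, and the result is retracted to `X`. -/
lemma IsFillingDomain.exists_isOpen {X : Type u} [TopologicalSpace X]
    [TopologicalSpace.MetrizableSpace X] [Nonempty X] (hX : IsANR X) {n : ℕ}
    {V : Set (SphereMaps n X)} (hV : IsFillingDomain V) :
    ∃ U, IsOpen U ∧ V ⊆ U ∧ IsFillingDomain U := by
  obtain ⟨E, _, _, K, O, ι, r, hK, hO, hιK, hιO, hr, hrι⟩ := hX.exists_retract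
  let _ := TopologicalSpace.metrizableSpaceMetric X
  obtain ⟨s, hs⟩ := hV
  have hs' : ∀ (v : ↥V) p, s v (sphIncl n p) = v.1.1 p := fun v p =>
    congrArg (fun f => f p) (hs v)
  obtain ⟨G, hG, hG1, hG2⟩ := exists_collar (n := n)
    (fun q : (SphereMaps n X × C(↥(Ball n), E)) × ↥(Ball n) => q.1.2 q.2) (by fun_prop)
    (fun q : (SphereMaps n X × C(↥(Ball n), E)) × ↥(Sph n) × ℝ =>
      (1 - q.2.2) • q.1.2 (sphIncl n q.2.1) + q.2.2 • ι (q.1.1.1 q.2.1)) (by fun_prop) (by simp)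
  let Gc : C(SphereMaps n X × C(↥(Ball n), E), C(↥(Ball n), E)) := ContinuousMap.curry ⟨G, hG⟩
  obtain ⟨U, g, hU, hVU, hgK, hgR⟩ := exists_approx_extension (V := V)
    (K := {β : C(↥(Ball n), E) | ∀ b, β b ∈ K}) (s := fun v => ι.comp (s v))
    (R := Gc ⁻¹' {β | MapsTo β univ O})
    (fun β hβ β' hβ' a b ha hb hab x => hK (hβ x) (hβ' x) ha hb hab)
    (by fun_prop) (fun v b => hιK _)
    ((ContinuousMap.isOpen_setOfPred_mapsTo isCompact_univ hO).preimage Gc.continuous)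
    (by
      intro v b _
      change G ((v.1, ι.comp (s v)), b) ∈ O
      rcases hG2 (v.1, ι.comp (s v)) b with ⟨b', hb'⟩ | ⟨p, t, -, h⟩
      · rw [hb']
        exact hιO _
      · rw [h]
        simp only [ContinuousMap.comp_apply, hs', ← add_smul, sub_add_cancel, one_smul]
        exact hιO _)
  have hmem : ∀ (u : ↥U) b, G ((u.1, g u), b) ∈ K ∩ O := fun u b => by
    refine ⟨?_, hgR u (mem_univ b)⟩
    rcases hG2 (u.1, g u) b with ⟨b', hb'⟩ | ⟨p, t, ht, h⟩
    · rw [hb']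
      exact hgK u b'
    · rw [h]
      exact hK (hgK u _) (hιK _) (by linarith [ht.2]) ht.1 (by ring)
  have hcont : Continuous fun q : ↥U × ↥(Ball n) => r (G ((q.1.1, g q.1), q.2)) :=
    hr.comp_continuous (by fun_prop) fun q => hmem q.1 q.2
  refine ⟨U, hU, hVU, ContinuousMap.curry ⟨_, hcont⟩, fun u => ?_⟩
  ext p
  simp only [ContinuousMap.comp_apply, ContinuousMap.curry_apply, ContinuousMap.coe_mk]
  rw [hG1]
  simp [hrι]

/-- Homotopy monotonicity of the spherical complexity. -/
lemma SCsub_le_of_homotopic_id {X : Type u} [TopologicalSpace X]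
    [TopologicalSpace.MetrizableSpace X] [Nonempty X] (hX : IsANR X) {n : ℕ}
    {A : Set (SphereMaps n X)} {ψ : C(↥A, ↥A)} (hψ : (ContinuousMap.id ↥A).Homotopic ψ)
    {B C : Set ↥A} (hBC : MapsTo ψ B C) :
    SCsub n X (Subtype.val '' B) ≤ SCsub n X (Subtype.val '' C) := by
  rcases SCsub_eq_top_or_cover (Subtype.val '' C) with h | ⟨m, hm, U, hU, hCU⟩
  · simp [h]
  choose W hW hUW hWf using fun i =>
    (isFillingDomain_preimage hψ (hU i).2).exists_isOpen hX
  rw [hm]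
  refine (SCsub_le_card W (fun i => ⟨hW i, hWf i⟩) ?_).trans (by simp)
  rintro _ ⟨γ, hγ, rfl⟩
  obtain ⟨i, hi⟩ := mem_iUnion.1 (hCU (mem_image_of_mem _ (hBC hγ)))
  exact mem_iUnion.2 ⟨i, hUW i ⟨γ, hi, rfl⟩⟩

/-! ### Iterating the map -/

section Dynamics

variable {Y : Type*} [TopologicalSpace Y]

/-- A homotopy `id ≃ φ` yields the infinite concatenation of the homotopies
`φᵏ ≃ φᵏ⁺¹`, `r ↦ φᵏ ∘ G_r`. Applying `φᵏ` after `G_r`, rather than before, keeps the values of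
a function decreasing along `φ` under control. -/
lemma exists_telescope {φ : C(Y, Y)} (G : (ContinuousMap.id Y).Homotopy φ) :
    ∃ H : Y × ℝ → Y, Continuous H ∧ (∀ y, H (y, 0) = y) ∧
      ∀ (y : Y) (t : ℝ), ∃ (k : ℕ) (r : unitInterval), t ≤ k + 1 ∧ H (y, t) = φ^[k] (G (r, y)) := by
  classical
  -- `Hm m` is the concatenation of the first `m` homotopies, constant for later times
  let Hm : ℕ → Y × ℝ → Y := fun m => Nat.rec (fun q => q.1)
    (fun k f q => if q.2 ≤ k then f q
      else φ^[k] (G (projIcc (0 : ℝ) 1 zero_le_one (q.2 - k), q.1))) m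
  have hsucc : ∀ k q, Hm (k + 1) q = if q.2 ≤ k then Hm k q
      else φ^[k] (G (projIcc (0 : ℝ) 1 zero_le_one (q.2 - k), q.1)) := fun k q => rfl
  have hend : ∀ (k : ℕ) (y : Y) (t : ℝ), (k : ℝ) ≤ t → Hm k (y, t) = φ^[k] y := by
    intro k
    induction k with
    | zero => intro y t _; rfl
    | succ k ih =>
      intro y t ht
      push_cast at ht
      rw [hsucc, if_neg (by simp only; linarith)]
      rw [projIcc_of_right_le _ (by simp only; linarith)]
      change φ^[k] (G (1, y)) = _
      rw [G.apply_one, Function.iterate_succ_apply]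
  have hcont : ∀ k, Continuous (Hm k) := by
    intro k
    induction k with
    | zero => exact continuous_fst
    | succ k ih =>
      have hit : Continuous (φ^[k]) := φ.continuous.iterate k
      refine Continuous.if_le ih (hit.comp (G.continuous.comp (by fun_prop))) continuous_snd
        continuous_const ?_
      rintro ⟨y, t⟩ ht
      simp only at ht ⊢
      refine (hend k y t ht.ge).trans ?_
      rw [ht, sub_self, projIcc_of_le_left _ le_rfl]
      change _ = φ^[k] (G (0, y))
      rw [G.apply_zero, ContinuousMap.id_apply]
  have hstab : ∀ (m k : ℕ) (y : Y) (t : ℝ), t ≤ (k : ℝ) → Hm (k + m) (y, t) = Hm k (y, t) := by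
    intro m k y t ht
    induction m with
    | zero => rfl
    | succ m ih =>
      rw [← add_assoc, hsucc, if_pos (by push_cast; linarith [(Nat.cast_nonneg m : (0 : ℝ) ≤ m)]), ih]
  let H : Y × ℝ → Y := fun q => Hm (⌈q.2⌉₊) q
  have hH : ∀ (k : ℕ) (y : Y) (t : ℝ), t ≤ (k : ℝ) → H (y, t) = Hm k (y, t) := by
    intro k y t ht
    obtain ⟨m, rfl⟩ := Nat.exists_eq_add_of_le (Nat.ceil_le.2 ht)
    exact (hstab m _ y t (Nat.le_ceil t)).symm
  refine ⟨H, continuous_iff_continuousAt.2 ?_, fun y => ?_, fun y t => ?_⟩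
  · rintro ⟨y, t⟩
    obtain ⟨k, hk⟩ := exists_nat_gt t
    refine (hcont k).continuousAt.congr ?_
    have : ∀ᶠ q : Y × ℝ in nhds (y, t), q.2 < k :=
      continuous_snd.continuousAt.eventually (gt_mem_nhds hk)
    filter_upwards [this] with q hq
    exact (hH k q.1 q.2 hq.le).symm
  · exact hH 0 y 0 (by simp)
  · rcases le_or_gt t 0 with ht | ht
    · refine ⟨0, 0, by simp; linarith, ?_⟩
      rw [hH 0 y t (by simpa using ht)]
      simp [Hm]
    · obtain ⟨k, hk⟩ : ∃ k, ⌈t⌉₊ = k + 1 := Nat.exists_eq_succ_of_ne_zero (Nat.ceil_pos.2 ht).ne'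
      have h1 : (k : ℝ) < t := by
        rw [← Nat.lt_ceil, hk]
        exact Nat.lt_succ_self k
      have h2 : t ≤ k + 1 := by
        have := Nat.le_ceil t
        rw [hk] at this
        exact_mod_cast this
      exact ⟨k, projIcc (0 : ℝ) 1 zero_le_one (t - k), h2, by
        rw [hH (k + 1) y t (by exact_mod_cast h2), hsucc, if_neg (not_le.2 h1)]⟩

variable {F : C(Y, ℝ)} {φ : C(Y, Y)}

lemma CondD.map_le (hD : CondD F φ) (y : Y) : F (φ y) ≤ F y := by
  by_cases h : φ y = y
  · rw [h]
  · exact (hD.1 y h).le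

lemma CondD.antitone (hD : CondD F φ) (y : Y) : Antitone fun k => F (φ^[k] y) :=
  antitone_nat_of_succ_le fun k => by
    simp only [Function.iterate_succ_apply']
    exact hD.map_le _

lemma CondD.exists_gap (hD : CondD F φ) {B : Set Y} (hB : IsClosed B) {a b : ℝ}
    (hab : ∀ y ∈ B, F y ∈ Icc a b) (hfix : ∀ y ∈ B, φ y ≠ y) :
    ∃ ε > 0, ∀ y ∈ B, F (φ y) ≤ F y - ε := by
  by_contra h
  obtain ⟨y, hy, hy'⟩ := hD.2 B ⟨max |a| |b|, fun y hy => abs_le_max_abs_abs (hab y hy).1 (hab y hy).2⟩ (by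
    rintro ⟨ε, hε, hB⟩
    refine h ⟨ε, hε, fun y hy => ?_⟩
    have := hB y hy
    rw [abs_of_nonneg (by linarith [hD.map_le y])] at this
    linarith)
  exact hfix y (hB.closure_eq ▸ hy) hy'

lemma CondD.exists_iterate_lt (hD : CondD F φ) {a b : ℝ}
    (hfix : ∀ y, φ y = y → F y ∉ Icc a b) : ∃ k : ℕ, ∀ y, F y ≤ b → F (φ^[k] y) < a := by
  obtain ⟨ε, hε, h⟩ := hD.exists_gap (B := F ⁻¹' Icc a b) (isClosed_Icc.preimage F.continuous)
    (fun y hy => hy) (fun y hy hy' => hfix y hy' hy)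
  obtain ⟨k, hk⟩ := exists_nat_gt ((b - a) / ε)
  rw [div_lt_iff₀ hε] at hk
  refine ⟨k, fun y hy => ?_⟩
  by_contra hcon
  have key : ∀ j ≤ k, F (φ^[j] y) ≤ b - j * ε := by
    intro j
    induction j with
    | zero => intro _; simpa using hy
    | succ j ih =>
      intro hj
      have h1 := ih (by omega)
      have h2 : a ≤ F (φ^[j] y) := (not_lt.1 hcon).trans (hD.antitone y (by omega : j ≤ k))
      have h3 : (0 : ℝ) ≤ j * ε := by positivity
      have h4 := h (φ^[j] y) ⟨h2, by linarith⟩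
      rw [Function.iterate_succ_apply']
      push_cast
      linarith
  have := key k le_rfl
  linarith [not_lt.1 hcon]

/-- If no fixed point lies at or above level `a`, the identity is homotopic to a map into the
open sublevel set of `a`, even when `F` is unbounded above: each point is moved along the telescope
of `exists_telescope` for a time depending continuously on the point. -/
lemma CondD.exists_deformation [TopologicalSpace.MetrizableSpace Y] (hD : CondD F φ)
    (hid : (ContinuousMap.id Y).Homotopic φ) {a : ℝ} (hfix : ∀ y, φ y = y → F y < a) :
    ∃ ψ : C(Y, Y), (ContinuousMap.id Y).Homotopic ψ ∧ ∀ y, F (ψ y) < a := by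
  let _ := TopologicalSpace.metrizableSpaceMetric Y
  obtain ⟨G⟩ := hid
  obtain ⟨H, hH, hH0, hHk⟩ := exists_telescope G
  obtain ⟨τ, hτ⟩ := exists_continuous_forall_mem_convex_of_local_const
    (t := fun y : Y => {t : ℝ | ∀ t' ≥ t, F (H (y, t')) < a})
    (fun y => by
      rintro t ht u hu c d hc hd hcd t' ht'
      rcases le_total t u with h | h
      · refine ht t' (le_trans ?_ ht')
        obtain rfl : c = 1 - d := by linarith
        simp only [smul_eq_mul]
        nlinarith [mul_nonneg hd (sub_nonneg.2 h)]
      · refine hu t' (le_trans ?_ ht')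
        obtain rfl : d = 1 - c := by linarith
        simp only [smul_eq_mul]
        nlinarith [mul_nonneg hc (sub_nonneg.2 h)])
    (fun y => by
      -- the track of `y` is compact, so a single iterate brings it below level `a`
      have hcomp : IsCompact (range fun r : unitInterval => F (G (r, y))) :=
        isCompact_range (by fun_prop)
      obtain ⟨b, hb⟩ := hcomp.bddAbove
      obtain ⟨p, hp⟩ := hD.exists_iterate_lt (a := a) (b := b)
        (fun z hz hz' => (hfix z hz).not_ge hz'.1)
      refine ⟨p + 1, ?_⟩
      have hc : Continuous fun q : Y × unitInterval => F (φ^[p] (G (q.2, q.1))) :=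
        F.continuous.comp ((φ.continuous.iterate p).comp (G.continuous.comp (by fun_prop)))
      have hev : ∀ᶠ z in nhds y, ∀ r ∈ (univ : Set unitInterval), F (φ^[p] (G (r, z))) < a := by
        refine isCompact_univ.eventually_forall_of_forall_eventually fun r _ => ?_
        exact hc.continuousAt.eventually (gt_mem_nhds (hp _ (hb (mem_range_self r))))
      filter_upwards [hev] with z hz t' ht'
      obtain ⟨k, r, hk, h⟩ := hHk z t'
      have hpk : p ≤ k := by
        have : (p : ℝ) ≤ k := by linarith [show (p : ℝ) + 1 ≤ t' from ht']
        exact_mod_cast this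
      rw [h]
      exact (hD.antitone _ hpk).trans_lt (hz r (mem_univ r)))
  refine ⟨⟨fun y => H (y, τ y), by fun_prop⟩, ⟨⟨⟨fun q => H (q.2, (q.1 : ℝ) * τ q.2),
    by fun_prop⟩, fun y => ?_, fun y => ?_⟩⟩, fun y => hτ y _ le_rfl⟩
  · simp [hH0]
  · simp

end Dynamics

/-! ### The Lusternik–Schnirelmann estimate -/

lemma homotopic_iterate {Y : Type*} [TopologicalSpace Y] {φ : C(Y, Y)}
    (h : (ContinuousMap.id Y).Homotopic φ) (k : ℕ) :
    ∃ ψ : C(Y, Y), (ContinuousMap.id Y).Homotopic ψ ∧ ∀ y, ψ y = φ^[k] y := by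
  induction k with
  | zero => exact ⟨ContinuousMap.id Y, .refl _, fun y => rfl⟩
  | succ k ih =>
    obtain ⟨ψ, hψ, hk⟩ := ih
    refine ⟨φ.comp ψ, by simpa using h.comp hψ, fun y => ?_⟩
    rw [Function.iterate_succ_apply', ContinuousMap.comp_apply, hk]

/-- The estimate for sublevel sets, by induction on the critical levels below `c`: crossing the
highest one, `μ`, costs at most `SC(Fix φ ∩ F_μ)`. -/
lemma SCsub_sublevel_le {X : Type u} [TopologicalSpace X]
    [TopologicalSpace.MetrizableSpace X] [Nonempty X] (hX : IsANR X) {n : ℕ}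
    {A : Set (SphereMaps n X)} {F : C(↥A, ℝ)} {φ : C(↥A, ↥A)}
    (hbd : ∃ c : ℝ, ∀ γ : ↥A, c ≤ F γ) (hD : CondD ⇑F ⇑φ)
    (hid : (ContinuousMap.id ↥A).Homotopic φ) (T : Finset ℝ) :
    ∀ c : ℝ, (∀ γ, φ γ = γ → F γ ≤ c → F γ ∈ T) →
      SCsub n X (Subtype.val '' {γ | F γ ≤ c}) ≤
        ∑ μ ∈ T, SCsub n X (Subtype.val '' {γ : ↥A | φ γ = γ ∧ F γ = μ}) := by
  -- descent through an interval without critical values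
  have descend : ∀ a b : ℝ, (∀ γ, φ γ = γ → F γ ∉ Icc a b) →
      SCsub n X (Subtype.val '' {γ | F γ ≤ b}) ≤ SCsub n X (Subtype.val '' {γ | F γ ≤ a}) := by
    intro a b hab
    obtain ⟨k, hk⟩ := hD.exists_iterate_lt hab
    obtain ⟨ψ, hψ, hψk⟩ := homotopic_iterate hid k
    refine SCsub_le_of_homotopic_id hX hψ fun γ hγ => ?_
    change F (ψ γ) ≤ a
    rw [hψk]
    exact (hk γ hγ).le
  induction T using Finset.induction_on_max with
  | empty =>
    intro c hc
    obtain ⟨m, hm⟩ := hbd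
    refine (descend (m - 1) c fun γ hγ h => by simpa using hc γ hγ h.2).trans ?_
    have : {γ | F γ ≤ m - 1} = ∅ := eq_empty_of_forall_notMem fun γ hγ => by
      have h1 : F γ ≤ m - 1 := hγ
      linarith [hm γ]
    simp [this, SCsub_empty]
  | insert μ T hμ ih =>
    intro c hc
    have hμT : μ ∉ T := fun h => lt_irrefl _ (hμ μ h)
    rw [Finset.sum_insert hμT]
    rcases lt_or_ge c μ with hcμ | hcμ
    · exact (ih c fun γ hγ h => Finset.mem_of_mem_insert_of_ne (hc γ hγ h)
        (by linarith : F γ < μ).ne).trans le_add_self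
    obtain ⟨δ, hδ, hδT⟩ : ∃ δ > 0, ∀ ν ∈ T, ν < μ - δ := by
      have : ∀ᶠ δ in nhdsWithin (0 : ℝ) (Ioi 0), ∀ ν ∈ T, ν < μ - δ := by
        rw [Filter.eventually_all_finset]
        intro ν hν
        have hc : ContinuousAt (fun δ : ℝ => μ - δ) 0 := by fun_prop
        exact nhdsWithin_le_nhds (hc.eventually (lt_mem_nhds (by simpa using hμ ν hν)))
      obtain ⟨δ, h1, h2⟩ := (this.and self_mem_nhdsWithin).exists
      exact ⟨δ, h2, h1⟩
    obtain ⟨U, hU, hKU, hUle⟩ :=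
      exists_isOpen_SCsub_le (n := n) (X := X) (Subtype.val '' {γ : ↥A | φ γ = γ ∧ F γ = μ})
    obtain ⟨ε, hε, hgap⟩ := hD.exists_gap
      (B := F ⁻¹' Icc (μ - δ) c ∩ (Subtype.val ⁻¹' U)ᶜ)
      ((isClosed_Icc.preimage F.continuous).inter
        (hU.preimage continuous_subtype_val).isClosed_compl)
      (fun γ hγ => hγ.1) (by
        rintro γ ⟨⟨h1, h2⟩, hγU⟩ hγ
        rcases Finset.mem_insert.1 (hc γ hγ h2) with h | h
        · exact hγU (hKU ⟨γ, ⟨hγ, h⟩, rfl⟩)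
        · linarith [hδT _ h])
    set η := min δ (ε / 3) with hη
    have hηpos : 0 < η := lt_min hδ (by positivity)
    have hηδ : η ≤ δ := min_le_left _ _
    have hηε : η ≤ ε / 3 := min_le_right _ _
    set b := min c (μ + η) with hb
    have step1 : SCsub n X (Subtype.val '' {γ | F γ ≤ c}) ≤
        SCsub n X (Subtype.val '' {γ | F γ ≤ b}) := by
      rcases le_total c (μ + η) with h | h
      · rw [hb, min_eq_left h]
      · rw [hb, min_eq_right h]
        refine descend _ _ fun γ hγ hmem => ?_
        rcases Finset.mem_insert.1 (hc γ hγ hmem.2) with h' | h'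
        · linarith [hmem.1]
        · linarith [hmem.1, hμ _ h']
    have step2 : SCsub n X (Subtype.val '' {γ | F γ ≤ b}) ≤
        SCsub n X U + SCsub n X (Subtype.val '' ({γ | F γ ≤ b} ∩ (Subtype.val ⁻¹' U)ᶜ)) := by
      refine (SCsub_mono ?_).trans (SCsub_union _ _)
      rintro _ ⟨γ, hγ, rfl⟩
      by_cases h : (γ : SphereMaps n X) ∈ U
      · exact Or.inl h
      · exact Or.inr ⟨γ, ⟨hγ, h⟩, rfl⟩
    have step3 : SCsub n X (Subtype.val '' ({γ | F γ ≤ b} ∩ (Subtype.val ⁻¹' U)ᶜ)) ≤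
        SCsub n X (Subtype.val '' {γ | F γ ≤ μ - η}) := by
      refine SCsub_le_of_homotopic_id hX hid ?_
      rintro γ ⟨hγ, hγU⟩
      have hγ1 : F γ ≤ c := le_trans hγ (min_le_left _ _)
      have hγ2 : F γ ≤ μ + η := le_trans hγ (min_le_right _ _)
      change F (φ γ) ≤ μ - η
      rcases le_total (F γ) (μ - η) with h | h
      · exact (hD.map_le γ).trans h
      · have := hgap γ ⟨⟨by linarith, hγ1⟩, hγU⟩
        linarith
    refine step1.trans (step2.trans (add_le_add hUle (step3.trans (ih (μ - η) fun γ hγ h => ?_))))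
    exact Finset.mem_of_mem_insert_of_ne (hc γ hγ (by linarith)) (by linarith : F γ < μ).ne

/-- under the hypotheses of the Lusternik–Schnirelmann-type estimate, if
moreover `φ` is homotopic to the identity and `F(Fix φ)` is finite, then
`SC_{n,X}(A) ≤ Σ_{μ ∈ ℝ} SC_{n,X}(Fix φ ∩ F_μ)`. -/
theorem SCsub_le_sum_of_homotopic_id {X : Type u} [TopologicalSpace X] [PathConnectedSpace X]
    [TopologicalSpace.MetrizableSpace X] (hX : IsANR X) (n : ℕ) (hn : 1 ≤ n)
    (A : Set (SphereMaps n X)) (F : C(↥A, ℝ)) (φ : C(↥A, ↥A)) (hφ : IsHtpyEquiv φ)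
    (hbd : ∃ c : ℝ, ∀ γ : ↥A, c ≤ F γ)
    (hD : CondD ⇑F ⇑φ)
    (hmono : ∀ B : Set ↥A, IsClosed B →
      SCsub n X (Subtype.val '' B) ≤ SCsub n X (Subtype.val '' (⇑φ '' B)))
    (hid : φ.Homotopic (ContinuousMap.id ↥A))
    (hfin : (⇑F '' {γ : ↥A | φ γ = γ}).Finite) :
    SCsub n X A ≤ esum (fun μ : ℝ =>
      SCsub n X (Subtype.val '' {γ : ↥A | φ γ = γ ∧ F γ = μ})) := by
  have hid' : (ContinuousMap.id ↥A).Homotopic φ := hid.symm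
  let _ := TopologicalSpace.metrizableSpaceMetric X
  obtain ⟨a, ha⟩ := hfin.bddAbove
  obtain ⟨ψ, hψ, hψa⟩ := hD.exists_deformation hid' (a := a + 1) fun γ hγ => by
    linarith [ha (mem_image_of_mem F hγ)]
  have h1 : SCsub n X (Subtype.val '' (univ : Set ↥A)) ≤
      SCsub n X (Subtype.val '' {γ | F γ ≤ a + 1}) :=
    SCsub_le_of_homotopic_id hX hψ fun γ _ => (hψa γ).le
  rw [image_univ, Subtype.range_coe] at h1
  refine h1.trans ((SCsub_sublevel_le hX hbd hD hid' hfin.toFinset (a + 1) fun γ hγ _ => ?_).trans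
    (le_iSup (fun s : Finset ℝ => ∑ μ ∈ s,
      SCsub n X (Subtype.val '' {γ : ↥A | φ γ = γ ∧ F γ = μ})) hfin.toFinset))
  exact hfin.mem_toFinset.2 (mem_image_of_mem F hγ)

end
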